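/- arXiv:1704.02476 — 13 statements merged into one kernel-verified Lean document; each statement's English description precedes it below -/
import Mathlib

section
/- Let A be a set, n ≥ 1, and let d_0, …, d_n : A³ → A be directed Jónsson operations on A. Let Θ be a reflexive symmetric binary relation on A compatible with each d_i, and let σ = ⋃_{g∈G} σ_g where G is nonempty and each σ_g is a reflexive binary relation compatible with each d_i. Then Θ ∩ (σ ∘ σ) ⊆ (Θ ∩ σ)^{∘(2n−2)}. -/
/-!
Let `(a, c) ∈ Θ`, `(a, b) ∈ σ g` and `(b, c) ∈ σ h`. The elements
`a = d 1 a a c, d 1 a b c, d 1 a c c = d 2 a a c, d 2 a b c, …, d (n - 1) a c c = d n a a c = c`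
form a chain of `2 * (n - 1)` steps, alternately in `σ g` and in `σ h`, because only the middle
argument moves. Each step is also in `Θ`, although neither `(a, b)` nor `(b, c)` need be: every
`u = d i a x c` is `Θ`-related to `a = d i a x a` and to `c = d i c x c`, so that
`u = d i u y u` is `Θ`-related to `d i a y c` for every `y` (`middle_mem_of_flat`).
-/

/-- Relational composition: `(a,c) ∈ rcomp R S` iff `∃ b, (a,b) ∈ R ∧ (b,c) ∈ S`. -/
def rcomp {A : Type*} (R S : Set (A × A)) : Set (A × A) :=
  {p | ∃ b, (p.1, b) ∈ R ∧ (b, p.2) ∈ S}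

/-- Alternating composition `R ∘ S ∘ R ∘ ⋯` with `m` factors (identity for `m = 0`). -/
def altComp {A : Type*} (R S : Set (A × A)) : ℕ → Set (A × A)
  | 0 => {p | p.1 = p.2}
  | n + 1 => rcomp R (altComp S R n)

/-- `relPow R m` is the composition of `m` copies of `R`. -/
def relPow {A : Type*} (R : Set (A × A)) (m : ℕ) : Set (A × A) := altComp R R m

/-- Compatibility of a binary relation with a ternary operation. -/
def compat3 {A : Type*} (R : Set (A × A)) (f : A → A → A → A) : Prop :=
  ∀ a₁ a₂ a₃ b₁ b₂ b₃, (a₁, b₁) ∈ R → (a₂, b₂) ∈ R → (a₃, b₃) ∈ R →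
    (f a₁ a₂ a₃, f b₁ b₂ b₃) ∈ R

/-- Compatibility of a binary relation with a 4-ary operation. -/
def compat4 {A : Type*} (R : Set (A × A)) (f : A → A → A → A → A) : Prop :=
  ∀ a₁ a₂ a₃ a₄ b₁ b₂ b₃ b₄, (a₁, b₁) ∈ R → (a₂, b₂) ∈ R → (a₃, b₃) ∈ R → (a₄, b₄) ∈ R →
    (f a₁ a₂ a₃ a₄, f b₁ b₂ b₃ b₄) ∈ R

/-- Converse of a binary relation. -/
def conv {A : Type*} (R : Set (A × A)) : Set (A × A) := {p | (p.2, p.1) ∈ R}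

/-- Transitive closure of a binary relation. -/
def transCl {A : Type*} (R : Set (A × A)) : Set (A × A) :=
  {p | Relation.TransGen (fun a b => (a, b) ∈ R) p.1 p.2}

/-- Changing the middle argument of `f a x c` arbitrarily stays within a compatible tolerance
that contains `(a, c)`, when `f u v u = u` holds identically. -/
theorem middle_mem_of_flat {A : Type*} {f : A → A → A → A} {Θ : Set (A × A)}
    (hflat : ∀ x y, f x y x = x)
    (hrefl : ∀ a, (a, a) ∈ Θ) (hsymm : ∀ a b, (a, b) ∈ Θ → (b, a) ∈ Θ) (hcomp : compat3 Θ f)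
    {a c : A} (hac : (a, c) ∈ Θ) (x y : A) : (f a x c, f a y c) ∈ Θ := by
  have hua : (f a x c, a) ∈ Θ := by
    simpa only [hflat] using hcomp a x c a x a (hrefl a) (hrefl x) (hsymm _ _ hac)
  have huc : (f a x c, c) ∈ Θ := by
    simpa only [hflat] using hcomp a x c c x c hac (hrefl x) (hrefl c)
  simpa only [hflat] using hcomp (f a x c) y (f a x c) a y c hua (hrefl y) huc

/-- directed Jónsson operations give
`Θ ∩ (σ ∘ σ) ⊆ (Θ ∩ σ)^{∘(2n-2)}` for a tolerance `Θ` and a U-admissible `σ`. -/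
theorem stmt0 {A : Type*} {n : ℕ} (hn : 1 ≤ n)
    (d : ℕ → A → A → A → A)
    (hd0 : ∀ x y z, d 0 x y z = x)
    (hdn : ∀ x y z, d n x y z = z)
    (hdflat : ∀ i, i ≤ n → ∀ x y, d i x y x = x)
    (hddir : ∀ i, i < n → ∀ x z, d i x z z = d (i + 1) x x z)
    (Θ : Set (A × A))
    (hΘrefl : ∀ a, (a, a) ∈ Θ)
    (hΘsymm : ∀ a b, (a, b) ∈ Θ → (b, a) ∈ Θ)
    (hΘcomp : ∀ i, i ≤ n → compat3 Θ (d i))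
    {G : Type*} [Nonempty G] (σ : G → Set (A × A))
    (hσrefl : ∀ g a, (a, a) ∈ σ g)
    (hσcomp : ∀ g i, i ≤ n → compat3 (σ g) (d i)) :
    Θ ∩ rcomp (⋃ g, σ g) (⋃ g, σ g) ⊆ relPow (Θ ∩ (⋃ g, σ g)) (2 * n - 2) := by
  rintro ⟨a, c⟩ ⟨hac, b, hab, hbc⟩
  obtain ⟨g, hg⟩ := Set.mem_iUnion.mp hab
  obtain ⟨h, hh⟩ := Set.mem_iUnion.mp hbc
  have key : ∀ k i, i + k = n →
      (d i a a c, c) ∈ relPow (Θ ∩ (⋃ g, σ g)) (2 * k) := by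
    intro k
    induction k with
    | zero =>
      rintro i rfl
      exact hdn a a c
    | succ k ih =>
      intro i hi
      have hin : i ≤ n := by omega
      have mid := middle_mem_of_flat (hdflat i hin) hΘrefl hΘsymm (hΘcomp i hin) hac
      refine ⟨d i a b c, ⟨mid a b, Set.mem_iUnion.mpr ⟨g, ?_⟩⟩,
        d i a c c, ⟨mid b c, Set.mem_iUnion.mpr ⟨h, ?_⟩⟩, ?_⟩
      · exact hσcomp g i hin _ _ _ _ _ _ (hσrefl g a) hg (hσrefl g c)
      · exact hσcomp h i hin _ _ _ _ _ _ (hσrefl h a) hh (hσrefl h c)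
      · change (d i a c c, c) ∈ relPow (Θ ∩ (⋃ g, σ g)) (2 * k)
        rw [hddir i (by omega)]
        exact ih (i + 1) (by omega)
  -- The chain starts at index `1`, since `d 1 a a c = d 0 a c c = a`.
  have h1 := key (n - 1) 1 (by omega)
  rw [← hddir 0 (by omega), hd0] at h1
  rwa [show 2 * n - 2 = 2 * (n - 1) by omega]
end

section
/- Let A be a set, n ≥ 1, and let d_0, …, d_n : A³ → A be directed Jónsson operations on A. Let Θ be a reflexive symmetric binary relation on A compatible with each d_i, and let σ = ⋃_{g∈G} σ_g where G is nonempty and each σ_g is a reflexive binary relation compatible with each d_i. Then for every m ≥ 1, Θ ∩ σ^{∘m} ⊆ (Θ ∩ σ)^{∘(mn−m)}. -/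
theorem relPow_trans {A : Type*} {R : Set (A × A)} {k l : ℕ} {x y z : A}
    (h₁ : (x, y) ∈ relPow R k) (h₂ : (y, z) ∈ relPow R l) : (x, z) ∈ relPow R (k + l) := by
  induction k generalizing x with
  | zero =>
    have e : x = y := h₁
    rw [Nat.zero_add, e]
    exact h₂
  | succ k ih =>
    obtain ⟨b, hb, h⟩ := h₁
    rw [Nat.succ_add]
    exact ⟨b, hb, ih h⟩

theorem relPow_map {A : Type*} {R S : Set (A × A)} {f : A → A}
    (hf : ∀ x y, (x, y) ∈ R → (f x, f y) ∈ S) {m : ℕ} {x y : A}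
    (h : (x, y) ∈ relPow R m) : (f x, f y) ∈ relPow S m := by
  induction m generalizing x with
  | zero => exact congrArg f h
  | succ m ih =>
    obtain ⟨b, hb, h⟩ := h
    exact ⟨f b, hf _ _ hb, ih h⟩

/-- The middle argument can be changed at will without leaving `Θ`, once the outer arguments are
`Θ`-related. -/
theorem middle_mem {A : Type*} {f : A → A → A → A} {Θ : Set (A × A)}
    (hflat : ∀ x y, f x y x = x) (hrefl : ∀ a, (a, a) ∈ Θ)
    (hsymm : ∀ a b, (a, b) ∈ Θ → (b, a) ∈ Θ) (hcomp : compat3 Θ f) {a c : A}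
    (hac : (a, c) ∈ Θ) (b b' : A) : (f a b c, f a b' c) ∈ Θ := by
  have hua : (f a b c, a) ∈ Θ := by
    simpa only [hflat] using hcomp a b c a b a (hrefl a) (hrefl b) (hsymm _ _ hac)
  have huc : (f a b c, c) ∈ Θ := by
    simpa only [hflat] using hcomp a b c c b c hac (hrefl b) (hrefl c)
  simpa only [hflat] using hcomp (f a b c) b' (f a b c) a b' c hua (hrefl b') huc

/-- directed Jónsson operations give
`Θ ∩ σ^{∘m} ⊆ (Θ ∩ σ)^{∘(mn-m)}` for every `m ≥ 1`. -/
theorem stmt1 {A : Type*} {n : ℕ} (hn : 1 ≤ n)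
    (d : ℕ → A → A → A → A)
    (hd0 : ∀ x y z, d 0 x y z = x)
    (hdn : ∀ x y z, d n x y z = z)
    (hdflat : ∀ i, i ≤ n → ∀ x y, d i x y x = x)
    (hddir : ∀ i, i < n → ∀ x z, d i x z z = d (i + 1) x x z)
    (Θ : Set (A × A))
    (hΘrefl : ∀ a, (a, a) ∈ Θ)
    (hΘsymm : ∀ a b, (a, b) ∈ Θ → (b, a) ∈ Θ)
    (hΘcomp : ∀ i, i ≤ n → compat3 Θ (d i))
    {G : Type*} [Nonempty G] (σ : G → Set (A × A))
    (hσrefl : ∀ g a, (a, a) ∈ σ g)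
    (hσcomp : ∀ g i, i ≤ n → compat3 (σ g) (d i)) :
    ∀ m, 1 ≤ m →
      Θ ∩ relPow (⋃ g, σ g) m ⊆ relPow (Θ ∩ (⋃ g, σ g)) (m * n - m) := by
  rintro m - ⟨a, c⟩ ⟨hac, hm⟩
  have step : ∀ i, i ≤ n → ∀ x y, (x, y) ∈ (⋃ g, σ g) →
      (d i a x c, d i a y c) ∈ Θ ∩ (⋃ g, σ g) := by
    intro i hi x y hxy
    obtain ⟨g, hg⟩ := Set.mem_iUnion.1 hxy
    exact ⟨middle_mem (hdflat i hi) hΘrefl hΘsymm (hΘcomp i hi) hac x y,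
      Set.mem_iUnion.2 ⟨g, hσcomp g i hi _ _ _ _ _ _ (hσrefl g a) hg (hσrefl g c)⟩⟩
  have key : ∀ k, k + 1 ≤ n →
      (a, d (k + 1) a a c) ∈ relPow (Θ ∩ (⋃ g, σ g)) (m * k) := by
    intro k
    induction k with
    | zero =>
      intro h
      rw [← hddir 0 h, hd0]
      exact (rfl : a = a)
    | succ k ih =>
      intro h
      rw [← hddir (k + 1) h, Nat.mul_succ]
      exact relPow_trans (ih (by omega)) (relPow_map (f := fun x => d (k + 1) a x c)
        (step (k + 1) (by omega)) hm)
  obtain ⟨k, rfl⟩ := Nat.exists_eq_add_of_le' hn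
  have h := key k le_rfl
  rw [hdn] at h
  rwa [Nat.mul_succ, Nat.add_sub_cancel]
end

section
/- Let A be a set, n ≥ 1, and let d_0, …, d_n : A³ → A be directed Jónsson operations on A. Let Θ be a reflexive symmetric binary relation on A compatible with each d_i, and let σ = ⋃_{g∈G} σ_g and τ = ⋃_{f∈F} τ_f, where G, F are nonempty and each σ_g and each τ_f is a reflexive binary relation compatible with each d_i. Then for every even m ≥ 2, Θ ∩ (σ ∘_m τ) ⊆ (Θ ∩ σ) ∘_{mn−m} (Θ ∩ τ). -/
theorem altComp_map {A B : Type*} {R S : Set (A × A)} {R' S' : Set (B × B)} (φ : A → B)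
    (hR : ∀ x y, (x, y) ∈ R → (φ x, φ y) ∈ R') (hS : ∀ x y, (x, y) ∈ S → (φ x, φ y) ∈ S')
    (k : ℕ) {x y : A} (h : (x, y) ∈ altComp R S k) : (φ x, φ y) ∈ altComp R' S' k := by
  induction k generalizing R S R' S' x with
  | zero => exact congrArg φ h
  | succ k ih =>
    obtain ⟨b, h1, h2⟩ := h
    exact ⟨φ b, hR _ _ h1, ih hS hR h2⟩

theorem altComp_trans_of_even {A : Type*} {R S : Set (A × A)} (j k : ℕ) {x y z : A}
    (h : (x, y) ∈ altComp R S (j + j)) (h' : (y, z) ∈ altComp R S k) :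
    (x, z) ∈ altComp R S (j + j + k) := by
  induction j generalizing x with
  | zero =>
    have e : x = y := h
    subst e
    simpa using h'
  | succ j ih =>
    rw [show j + 1 + (j + 1) = j + j + 1 + 1 by omega] at h
    obtain ⟨b, h1, b', h2, h3⟩ := h
    rw [show j + 1 + (j + 1) + k = j + j + k + 1 + 1 by omega]
    exact ⟨b, h1, b', h2, ih h3⟩

/-- Flatness writes `t a b c` as `t (t a b' a) b (t c b' c)` and `t a b' c` as
`t (t a b' c) b (t a b' c)`; the two expressions differ only by exchanging `a` and `c` in two
places, so no transitivity of `Θ` is needed. -/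
theorem mid_mem_of_flat {A : Type*} {Θ : Set (A × A)} {t : A → A → A → A}
    (hrefl : ∀ a, (a, a) ∈ Θ) (hsymm : ∀ a b, (a, b) ∈ Θ → (b, a) ∈ Θ) (hcomp : compat3 Θ t)
    (hflat : ∀ x y, t x y x = x) {a c : A} (hac : (a, c) ∈ Θ) (b b' : A) :
    (t a b c, t a b' c) ∈ Θ := by
  have key := hcomp _ _ _ _ _ _ (hcomp a b' a a b' c (hrefl _) (hrefl _) hac) (hrefl b)
    (hcomp c b' c a b' c (hsymm _ _ hac) (hrefl _) (hrefl _))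
  simpa only [hflat] using key

/-- directed Jónsson operations give
`Θ ∩ (σ ∘_m τ) ⊆ (Θ ∩ σ) ∘_{mn-m} (Θ ∩ τ)` for every even `m ≥ 2`. -/
theorem stmt2 {A : Type*} {n : ℕ} (hn : 1 ≤ n)
    (d : ℕ → A → A → A → A)
    (hd0 : ∀ x y z, d 0 x y z = x)
    (hdn : ∀ x y z, d n x y z = z)
    (hdflat : ∀ i, i ≤ n → ∀ x y, d i x y x = x)
    (hddir : ∀ i, i < n → ∀ x z, d i x z z = d (i + 1) x x z)
    (Θ : Set (A × A))
    (hΘrefl : ∀ a, (a, a) ∈ Θ)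
    (hΘsymm : ∀ a b, (a, b) ∈ Θ → (b, a) ∈ Θ)
    (hΘcomp : ∀ i, i ≤ n → compat3 Θ (d i))
    {G : Type*} [Nonempty G] (σ : G → Set (A × A))
    (hσrefl : ∀ g a, (a, a) ∈ σ g)
    (hσcomp : ∀ g i, i ≤ n → compat3 (σ g) (d i))
    {F : Type*} [Nonempty F] (τ : F → Set (A × A))
    (hτrefl : ∀ f a, (a, a) ∈ τ f)
    (hτcomp : ∀ f i, i ≤ n → compat3 (τ f) (d i)) :
    ∀ m, 2 ≤ m → Even m →
      Θ ∩ altComp (⋃ g, σ g) (⋃ f, τ f) m ⊆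
        altComp (Θ ∩ (⋃ g, σ g)) (Θ ∩ (⋃ f, τ f)) (m * n - m) := by
  rintro m - ⟨j, rfl⟩ ⟨a, c⟩ ⟨hac, hch⟩
  have step : ∀ i, i ≤ n → (d i a a c, d i a c c) ∈
      altComp (Θ ∩ (⋃ g, σ g)) (Θ ∩ (⋃ f, τ f)) (j + j) := by
    intro i hi
    refine altComp_map (fun x => d i a x c) ?_ ?_ (j + j) hch
    · intro x y hxy
      obtain ⟨g, hg⟩ := Set.mem_iUnion.1 hxy
      exact ⟨mid_mem_of_flat hΘrefl hΘsymm (hΘcomp i hi) (hdflat i hi) hac x y,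
        Set.mem_iUnion.2 ⟨g, hσcomp g i hi _ _ _ _ _ _ (hσrefl g a) hg (hσrefl g c)⟩⟩
    · intro x y hxy
      obtain ⟨f, hf⟩ := Set.mem_iUnion.1 hxy
      exact ⟨mid_mem_of_flat hΘrefl hΘsymm (hΘcomp i hi) (hdflat i hi) hac x y,
        Set.mem_iUnion.2 ⟨f, hτcomp f i hi _ _ _ _ _ _ (hτrefl f a) hf (hτrefl f c)⟩⟩
  -- Prepending blocks of length `j + j` matches the recursion of `altComp`, so the induction
  -- runs downwards from the end point `d n a a c = c`.
  have main : ∀ k, k + 1 ≤ n → (d (n - k) a a c, c) ∈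
      altComp (Θ ∩ (⋃ g, σ g)) (Θ ∩ (⋃ f, τ f)) ((j + j) * k) := by
    intro k
    induction k with
    | zero => intro _; exact hdn a a c
    | succ k ih =>
      intro hk
      have h1 := step (n - (k + 1)) (by omega)
      rw [hddir _ (by omega), show n - (k + 1) + 1 = n - k by omega] at h1
      have h2 := altComp_trans_of_even j _ h1 (ih (by omega))
      rwa [show (j + j) * (k + 1) = j + j + (j + j) * k by ring]
  have h := main (n - 1) (by omega)
  rw [show n - (n - 1) = 0 + 1 by omega, ← hddir 0 (by omega), hd0] at h
  rwa [Nat.mul_sub, Nat.mul_one] at h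
end

section
/- Let R and S be reflexive and transitive binary relations on a set A and let k ≥ 1. Then (R ∪ S)^{∘k} ⊆ (R ∘_k S) ∪ (S ∘_k R), where R ∘_k S is the alternating composition R ∘ S ∘ R ∘ ⋯ with k factors starting with R, and S ∘_k R is the alternating composition with k factors starting with S. -/
theorem altComp_subset_succ {A : Type*} (n : ℕ) :
    ∀ R S : Set (A × A), (∀ a, (a, a) ∈ R) → (∀ a, (a, a) ∈ S) →
      altComp R S n ⊆ altComp R S (n + 1) := by
  induction n with
  | zero =>
    rintro R S hR - ⟨a, c⟩ h
    exact ⟨c, (show a = c from h) ▸ hR a, rfl⟩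
  | succ n ih =>
    rintro R S hR hS ⟨a, c⟩ ⟨b, hab, hbc⟩
    exact ⟨b, hab, ih S R hS hR hbc⟩

/-- A further `R`-step before an alternating chain that starts with `R` is absorbed by
transitivity into its first factor; before the empty chain it is the single factor. -/
theorem altComp_cons {A : Type*} {R S : Set (A × A)} (hR : ∀ a, (a, a) ∈ R)
    (hRt : ∀ a b c, (a, b) ∈ R → (b, c) ∈ R → (a, c) ∈ R) (hS : ∀ a, (a, a) ∈ S)
    (n : ℕ) {a b c : A} (hab : (a, b) ∈ R) (hbc : (b, c) ∈ altComp R S n) :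
    (a, c) ∈ altComp R S (n + 1) := by
  cases n with
  | zero => exact ⟨b, hab, hbc⟩
  | succ n =>
    obtain ⟨d, hbd, hdc⟩ := hbc
    exact ⟨d, hRt a b d hab hbd, altComp_subset_succ n S R hS hR hdc⟩

/-- for reflexive transitive `R, S` and `k ≥ 1`,
`(R ∪ S)^{∘k} ⊆ (R ∘_k S) ∪ (S ∘_k R)`. -/
theorem stmt7 {A : Type*} (R S : Set (A × A))
    (hRrefl : ∀ a, (a, a) ∈ R)
    (hRtrans : ∀ a b c, (a, b) ∈ R → (b, c) ∈ R → (a, c) ∈ R)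
    (hSrefl : ∀ a, (a, a) ∈ S)
    (hStrans : ∀ a b c, (a, b) ∈ S → (b, c) ∈ S → (a, c) ∈ S)
    (k : ℕ) (hk : 1 ≤ k) :
    relPow (R ∪ S) k ⊆ altComp R S k ∪ altComp S R k := by
  unfold relPow
  clear hk
  induction k with
  | zero => exact fun p hp => Or.inl hp
  | succ n ih =>
    rintro ⟨a, c⟩ ⟨b, hab, hbc⟩
    rcases hab with hab | hab <;> rcases ih hbc with h | h
    · exact Or.inl (altComp_cons hRrefl hRtrans hSrefl n hab h)
    · exact Or.inl ⟨b, hab, h⟩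
    · exact Or.inr ⟨b, hab, h⟩
    · exact Or.inr (altComp_cons hSrefl hStrans hRrefl n hab h)
end

section
/- Let A be a set and m : A³ → A a majority operation, i.e., m(x,x,y) = m(x,y,x) = m(y,x,x) = x for all x, y ∈ A. Let σ, τ, υ each be the union of a nonempty family of reflexive binary relations on A, each member of each family being compatible with m. Then σ ∩ (τ ∘ υ) ⊆ (σ ∩ τ) ∘ (σ ∩ υ). -/
/-- a majority operation gives `σ ∩ (τ ∘ υ) ⊆ (σ∩τ) ∘ (σ∩υ)`
for U-admissible relations. -/
theorem stmt8 {A : Type*} (m : A → A → A → A)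
    (hm1 : ∀ x y, m x x y = x)
    (hm2 : ∀ x y, m x y x = x)
    (hm3 : ∀ x y, m y x x = x)
    {G F H : Type*} [Nonempty G] [Nonempty F] [Nonempty H]
    (σ : G → Set (A × A)) (τ : F → Set (A × A)) (υ : H → Set (A × A))
    (hσrefl : ∀ g a, (a, a) ∈ σ g) (hσcomp : ∀ g, compat3 (σ g) m)
    (hτrefl : ∀ f a, (a, a) ∈ τ f) (hτcomp : ∀ f, compat3 (τ f) m)
    (hυrefl : ∀ e a, (a, a) ∈ υ e) (hυcomp : ∀ e, compat3 (υ e) m) :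
    (⋃ g, σ g) ∩ rcomp (⋃ f, τ f) (⋃ e, υ e) ⊆
      rcomp ((⋃ g, σ g) ∩ (⋃ f, τ f)) ((⋃ g, σ g) ∩ (⋃ e, υ e)) := by
  rintro ⟨a, c⟩ ⟨hac, b, hab, hbc⟩
  simp only [Set.mem_iUnion] at hac hab hbc
  obtain ⟨g, hac⟩ := hac
  obtain ⟨f, hab⟩ := hab
  obtain ⟨e, hbc⟩ := hbc
  -- The intermediate point is `m a b c`: the majority laws rewrite `a` as `m a b a` or `m a a c`,
  -- and `c` as `m c b c` or `m a c c`, so each pair below changes one argument of `m`.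
  have h₁ := hσcomp g a b a a b c (hσrefl g a) (hσrefl g b) hac
  have h₂ := hτcomp f a a c a b c (hτrefl f a) hab (hτrefl f c)
  have h₃ := hσcomp g a b c c b c hac (hσrefl g b) (hσrefl g c)
  have h₄ := hυcomp e a b c a c c (hυrefl e a) hbc (hυrefl e c)
  rw [hm2] at h₁ h₃
  rw [hm1] at h₂
  rw [hm3] at h₄
  exact ⟨m a b c, ⟨Set.mem_iUnion.2 ⟨g, h₁⟩, Set.mem_iUnion.2 ⟨f, h₂⟩⟩,
    ⟨Set.mem_iUnion.2 ⟨g, h₃⟩, Set.mem_iUnion.2 ⟨e, h₄⟩⟩⟩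
end

section
/- Let A be a set and p : A³ → A a Pixley operation, i.e., p(x,y,y) = x, p(x,y,x) = x and p(x,x,y) = y for all x, y ∈ A. Let σ, τ, υ each be the union of a nonempty family of reflexive binary relations on A, each member of each family being compatible with p. Then σ ∩ (τ ∘ υ) ⊆ (σ ∩ υ) ∘ (σ ∩ τ). -/
/-- a Pixley operation gives `σ ∩ (τ ∘ υ) ⊆ (σ∩υ) ∘ (σ∩τ)`
for U-admissible relations. -/
theorem stmt9 {A : Type*} (p : A → A → A → A)
    (hp1 : ∀ x y, p x y y = x)
    (hp2 : ∀ x y, p x y x = x)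
    (hp3 : ∀ x y, p x x y = y)
    {G F H : Type*} [Nonempty G] [Nonempty F] [Nonempty H]
    (σ : G → Set (A × A)) (τ : F → Set (A × A)) (υ : H → Set (A × A))
    (hσrefl : ∀ g a, (a, a) ∈ σ g) (hσcomp : ∀ g, compat3 (σ g) p)
    (hτrefl : ∀ f a, (a, a) ∈ τ f) (hτcomp : ∀ f, compat3 (τ f) p)
    (hυrefl : ∀ e a, (a, a) ∈ υ e) (hυcomp : ∀ e, compat3 (υ e) p) :
    (⋃ g, σ g) ∩ rcomp (⋃ f, τ f) (⋃ e, υ e) ⊆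
      rcomp ((⋃ g, σ g) ∩ (⋃ e, υ e)) ((⋃ g, σ g) ∩ (⋃ f, τ f)) := by
  rintro ⟨a, c⟩ ⟨hac, b, hab, hbc⟩
  simp only [Set.mem_iUnion] at hac hab hbc
  obtain ⟨g, hac⟩ := hac
  obtain ⟨f, hab⟩ := hab
  obtain ⟨e, hbc⟩ := hbc
  -- The intermediate point is `p a b c`; each of the four relations below comes from
  -- rewriting one endpoint by a Pixley identity and moving a single argument.
  refine ⟨p a b c, ⟨Set.mem_iUnion.2 ⟨g, ?_⟩, Set.mem_iUnion.2 ⟨e, ?_⟩⟩,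
    ⟨Set.mem_iUnion.2 ⟨g, ?_⟩, Set.mem_iUnion.2 ⟨f, ?_⟩⟩⟩
  · have h := hσcomp g a b a a b c (hσrefl g a) (hσrefl g b) hac
    rwa [hp2] at h
  · have h := hυcomp e a b b a b c (hυrefl e a) (hυrefl e b) hbc
    rwa [hp1] at h
  · have h := hσcomp g a b c c b c hac (hσrefl g b) (hσrefl g c)
    rwa [hp2] at h
  · have h := hτcomp f a b c b b c hab (hτrefl f b) (hτrefl f c)
    rwa [hp3] at h
end

section
/- Let A be a set and p : A³ → A a Pixley operation, i.e., p(x,y,y) = x, p(x,y,x) = x and p(x,x,y) = y for all x, y ∈ A. Let T, R, S be reflexive binary relations on A, each compatible with p. Then T ∩ (R ∘ S) = (T ∩ R) ∘ (T ∩ S). -/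
/-- a Pixley operation gives `T ∩ (R ∘ S) = (T∩R) ∘ (T∩S)`
for reflexive admissible relations. -/
theorem stmt10 {A : Type*} (p : A → A → A → A)
    (hp1 : ∀ x y, p x y y = x)
    (hp2 : ∀ x y, p x y x = x)
    (hp3 : ∀ x y, p x x y = y)
    (T R S : Set (A × A))
    (hTrefl : ∀ a, (a, a) ∈ T) (hTcomp : compat3 T p)
    (hRrefl : ∀ a, (a, a) ∈ R) (hRcomp : compat3 R p)
    (hSrefl : ∀ a, (a, a) ∈ S) (hScomp : compat3 S p) :
    T ∩ rcomp R S = rcomp (T ∩ R) (T ∩ S) := by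
  ext ⟨a, c⟩
  constructor
  · rintro ⟨hT, b, hR, hS⟩
    -- The auxiliary element `e = p a b c` gives the chain from `c` to `a` instead: `c R e` and
    -- `e S a`. A second application, `p a e c`, reverses the direction.
    have hRe : (c, p a b c) ∈ R := by
      simpa only [hp3] using hRcomp a a c a b c (hRrefl a) hR (hRrefl c)
    have hSe : (p a b c, a) ∈ S := by
      simpa only [hp1] using hScomp a b c a c c (hSrefl a) hS (hSrefl c)
    generalize p a b c = e at hRe hSe
    refine ⟨p a e c, ⟨?_, ?_⟩, ⟨?_, ?_⟩⟩
    · simpa only [hp2] using hTcomp a e a a e c (hTrefl a) (hTrefl e) hT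
    · simpa only [hp1] using hRcomp a c c a e c (hRrefl a) hRe (hRrefl c)
    · simpa only [hp2] using hTcomp a e c c e c hT (hTrefl e) (hTrefl c)
    · simpa only [hp3] using hScomp a e c a a c (hSrefl a) hSe (hSrefl c)
  · rintro ⟨b, ⟨hTab, hR⟩, ⟨hTbc, hS⟩⟩
    refine ⟨?_, b, hR, hS⟩
    -- Transitivity of `T`: a reflexive relation compatible with a Maltsev operation is transitive.
    simpa only [hp1, hp3] using hTcomp a b b b b c hTab (hTrefl b) hTbc
end

section
/- Let L be a lattice and define f : L³ → L by f(a,b,c) = a ∧ (b ∨ c). Let σ, τ, υ each be the union of a nonempty family of reflexive binary relations on L, each member of each family being compatible with f. Then σ ∩ (τ ∘ υ) ⊆ (σ∩τ) ∘ (σ∩υ) ∘ (σ∩τ) ∘ (σ∩υ). -/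
/-- in a lattice, compatibility with `f a b c = a ⊓ (b ⊔ c)` gives
`σ ∩ (τ ∘ υ) ⊆ (σ∩τ) ∘ (σ∩υ) ∘ (σ∩τ) ∘ (σ∩υ)` for U-admissible relations. -/
theorem stmt12 {L : Type*} [Lattice L]
    {G F H : Type*} [Nonempty G] [Nonempty F] [Nonempty H]
    (σ : G → Set (L × L)) (τ : F → Set (L × L)) (υ : H → Set (L × L))
    (hσrefl : ∀ g a, (a, a) ∈ σ g)
    (hσcomp : ∀ g, compat3 (σ g) fun a b c => a ⊓ (b ⊔ c))
    (hτrefl : ∀ f a, (a, a) ∈ τ f)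
    (hτcomp : ∀ f, compat3 (τ f) fun a b c => a ⊓ (b ⊔ c))
    (hυrefl : ∀ e a, (a, a) ∈ υ e)
    (hυcomp : ∀ e, compat3 (υ e) fun a b c => a ⊓ (b ⊔ c)) :
    (⋃ g, σ g) ∩ rcomp (⋃ f, τ f) (⋃ e, υ e) ⊆
      rcomp ((⋃ g, σ g) ∩ (⋃ f, τ f))
        (rcomp ((⋃ g, σ g) ∩ (⋃ e, υ e))
          (rcomp ((⋃ g, σ g) ∩ (⋃ f, τ f)) ((⋃ g, σ g) ∩ (⋃ e, υ e)))) := by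
  rintro ⟨a, c⟩ ⟨hac, b, hab, hbc⟩
  obtain ⟨g, hg⟩ := Set.mem_iUnion.1 hac
  obtain ⟨f, hf⟩ := Set.mem_iUnion.1 hab
  obtain ⟨e, he⟩ := Set.mem_iUnion.1 hbc
  simp only at hg hf he
  have ham : (a, a ⊓ c) ∈ σ g := by
    simpa using hσcomp g a a a a c c (hσrefl g a) hg hg
  have hmc : (a ⊓ c, c) ∈ σ g := by
    simpa [inf_comm] using hσcomp g c a a c c c (hσrefl g c) hg hg
  have hma : a ⊓ c ≤ a ⊓ (b ⊔ a ⊓ c) := le_inf inf_le_left le_sup_right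
  have hmy : a ⊓ c ≤ c ⊓ (b ⊔ a ⊓ c) := le_inf inf_le_right le_sup_right
  -- The identities that evaluate the operation at the endpoints of each step.
  have e₁ : a ⊓ (a ⊔ a ⊓ c) = a := by simp
  have e₂ : a ⊓ (c ⊔ a ⊓ c) = a ⊓ c := by rw [sup_eq_left.2 inf_le_right]
  have e₃ : c ⊓ (a ⊔ a ⊓ c) = a ⊓ c := by rw [sup_eq_left.2 inf_le_left, inf_comm]
  have e₄ : c ⊓ (c ⊔ a ⊓ c) = c := by simp
  have e₅ : a ⊓ (b ⊔ a) = a := by simp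
  have e₆ : c ⊓ (b ⊔ c) = c := by simp
  have e₇ : a ⊓ (b ⊔ a ⊓ c) ⊓ (a ⊔ a) = a ⊓ (b ⊔ a ⊓ c) := by simp
  have e₈ : a ⊓ (b ⊔ a ⊓ c) ⊓ (c ⊔ c) = a ⊓ c := by
    rw [sup_idem]
    exact le_antisymm (inf_le_inf_right c inf_le_left) (le_inf hma inf_le_right)
  have e₉ : c ⊓ (b ⊔ a ⊓ c) ⊓ (a ⊔ a) = a ⊓ c := by
    rw [sup_idem]
    exact le_antisymm (le_inf inf_le_right (inf_le_left.trans inf_le_left))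
      (le_inf hmy inf_le_left)
  have e₁₀ : c ⊓ (b ⊔ a ⊓ c) ⊓ (c ⊔ c) = c ⊓ (b ⊔ a ⊓ c) := by simp
  have s₁ := hσcomp g a b a a b (a ⊓ c) (hσrefl g _) (hσrefl g _) ham
  have s₂ := hσcomp g (a ⊓ (b ⊔ a ⊓ c)) a a _ c c (hσrefl g _) hg hg
  have s₃ := hσcomp g (c ⊓ (b ⊔ a ⊓ c)) a a _ c c (hσrefl g _) hg hg
  have s₄ := hσcomp g c b (a ⊓ c) c b c (hσrefl g _) (hσrefl g _) hmc
  have t₁ := hτcomp f a a (a ⊓ c) a b _ (hτrefl f _) hf (hτrefl f _)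
  have t₃ := hτcomp f c a (a ⊓ c) c b _ (hτrefl f _) hf (hτrefl f _)
  have u₂ := hυcomp e a b (a ⊓ c) a c _ (hυrefl e _) he (hυrefl e _)
  have u₄ := hυcomp e c b (a ⊓ c) c c _ (hυrefl e _) he (hυrefl e _)
  simp only [e₁, e₂, e₃, e₄, e₅, e₆, e₇, e₈, e₉, e₁₀] at s₁ s₂ s₃ s₄ t₁ t₃ u₂ u₄
  exact ⟨a ⊓ (b ⊔ a ⊓ c), ⟨Set.mem_iUnion.2 ⟨g, s₁⟩, Set.mem_iUnion.2 ⟨f, t₁⟩⟩,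
    a ⊓ c, ⟨Set.mem_iUnion.2 ⟨g, s₂⟩, Set.mem_iUnion.2 ⟨e, u₂⟩⟩,
    c ⊓ (b ⊔ a ⊓ c), ⟨Set.mem_iUnion.2 ⟨g, s₃⟩, Set.mem_iUnion.2 ⟨f, t₃⟩⟩,
    ⟨Set.mem_iUnion.2 ⟨g, s₄⟩, Set.mem_iUnion.2 ⟨e, u₄⟩⟩⟩
end

section
/- Let A be a set and h ≥ 1. Suppose there are operations t_i : A³ → A for 0 ≤ i ≤ h and u_i, s_i : A⁴ → A for 0 ≤ i < h satisfying, for all x,y,z ∈ A: t_0(x,y,z) = x; t_h(x,y,z) = z; for all i < h: t_i(x,y,z) = u_i(x,y,z,x) and u_i(x,y,z,z) = t_{i+1}(x,y,z); for even i < h: t_i(x,y,z) = s_i(x,y,z,x) and s_i(x,y,z,y) = t_{i+1}(x,y,z); for odd i < h: t_i(x,y,z) = s_i(x,y,z,y) and s_i(x,y,z,z) = t_{i+1}(x,y,z). Let σ, τ, υ each be the union of a nonempty family of reflexive binary relations on A, each member of each family being compatible with every u_i and every s_i. Then σ ∩ (τ ∘ υ) ⊆ (σ∩τ) ∘_h (σ∩υ).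 -/
/-- A sequence whose even steps lie in `R` and odd steps in `S` witnesses `altComp R S n`. -/
theorem altComp_of_path {A : Type*} (n : ℕ) (R S : Set (A × A)) (p : ℕ → A)
    (hR : ∀ i, i < n → Even i → (p i, p (i + 1)) ∈ R)
    (hS : ∀ i, i < n → Odd i → (p i, p (i + 1)) ∈ S) :
    (p 0, p n) ∈ altComp R S n := by
  induction n generalizing R S p with
  | zero => exact rfl
  | succ n ih =>
    refine ⟨p 1, hR 0 (Nat.succ_pos n) Even.zero, ?_⟩
    -- Shifting the sequence by one interchanges the roles of `R` and `S`.
    exact ih S R (fun i => p (i + 1))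
      (fun i hi he => hS (i + 1) (Nat.succ_lt_succ hi) he.add_one)
      (fun i hi ho => hR (i + 1) (Nat.succ_lt_succ hi) ho.add_one)

/-- Maltsev-type terms `t_i, u_i, s_i` give
`σ ∩ (τ ∘ υ) ⊆ (σ∩τ) ∘_h (σ∩υ)` for U-admissible relations. -/
theorem stmt14 {A : Type*} {h : ℕ} (hh : 1 ≤ h)
    (t : ℕ → A → A → A → A) (u s : ℕ → A → A → A → A → A)
    (ht0 : ∀ x y z, t 0 x y z = x)
    (hth : ∀ x y z, t h x y z = z)
    (hu1 : ∀ i, i < h → ∀ x y z, t i x y z = u i x y z x)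
    (hu2 : ∀ i, i < h → ∀ x y z, u i x y z z = t (i + 1) x y z)
    (hs1even : ∀ i, i < h → Even i → ∀ x y z, t i x y z = s i x y z x)
    (hs2even : ∀ i, i < h → Even i → ∀ x y z, s i x y z y = t (i + 1) x y z)
    (hs1odd : ∀ i, i < h → Odd i → ∀ x y z, t i x y z = s i x y z y)
    (hs2odd : ∀ i, i < h → Odd i → ∀ x y z, s i x y z z = t (i + 1) x y z)
    {G F H : Type*} [Nonempty G] [Nonempty F] [Nonempty H]
    (σ : G → Set (A × A)) (τ : F → Set (A × A)) (υ : H → Set (A × A))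
    (hσrefl : ∀ g a, (a, a) ∈ σ g)
    (hσcomp : ∀ g i, i < h → compat4 (σ g) (u i) ∧ compat4 (σ g) (s i))
    (hτrefl : ∀ f a, (a, a) ∈ τ f)
    (hτcomp : ∀ f i, i < h → compat4 (τ f) (u i) ∧ compat4 (τ f) (s i))
    (hυrefl : ∀ e a, (a, a) ∈ υ e)
    (hυcomp : ∀ e i, i < h → compat4 (υ e) (u i) ∧ compat4 (υ e) (s i)) :
    (⋃ g, σ g) ∩ rcomp (⋃ f, τ f) (⋃ e, υ e) ⊆
      altComp ((⋃ g, σ g) ∩ (⋃ f, τ f)) ((⋃ g, σ g) ∩ (⋃ e, υ e)) h := by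
  rintro ⟨a, c⟩ ⟨hac, b, hab, hbc⟩
  obtain ⟨g, hg⟩ := Set.mem_iUnion.1 hac
  obtain ⟨f, hf⟩ := Set.mem_iUnion.1 hab
  obtain ⟨e, he⟩ := Set.mem_iUnion.1 hbc
  have hσ : ∀ i, i < h → (t i a b c, t (i + 1) a b c) ∈ σ g := by
    intro i hi
    rw [hu1 i hi, ← hu2 i hi]
    exact (hσcomp g i hi).1 _ _ _ _ _ _ _ _ (hσrefl g a) (hσrefl g b) (hσrefl g c) hg
  have key := altComp_of_path h ((⋃ g, σ g) ∩ (⋃ f, τ f)) ((⋃ g, σ g) ∩ (⋃ e, υ e))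
    (fun i => t i a b c) ?_ ?_
  · simpa only [ht0, hth] using key
  · intro i hi hev
    refine ⟨Set.mem_iUnion.2 ⟨g, hσ i hi⟩, Set.mem_iUnion.2 ⟨f, ?_⟩⟩
    rw [hs1even i hi hev, ← hs2even i hi hev]
    exact (hτcomp f i hi).2 _ _ _ _ _ _ _ _ (hτrefl f a) (hτrefl f b) (hτrefl f c) hf
  · intro i hi hodd
    refine ⟨Set.mem_iUnion.2 ⟨g, hσ i hi⟩, Set.mem_iUnion.2 ⟨e, ?_⟩⟩
    rw [hs1odd i hi hodd, ← hs2odd i hi hodd]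
    exact (hυcomp e i hi).2 _ _ _ _ _ _ _ _ (hυrefl e a) (hυrefl e b) (hυrefl e c) he
end

section
/- Let A be a set, h ≥ 1, and f : {0,1,…,h−1} → {1,2}. Define ternary maps w_1(x,y,z) = x, w_2(x,y,z) = y, w'_1(x,y,z) = y, w'_2(x,y,z) = z. Suppose there are operations t_i : A³ → A for 0 ≤ i ≤ h and s_i : A⁴ → A for 0 ≤ i < h satisfying, for all x,y,z ∈ A: t_0(x,y,z) = x; t_h(x,y,z) = z; t_i(x,y,x) = x for all 0 ≤ i ≤ h; and for all i < h: t_i(x,y,z) = s_i(x,y,z, w_{f(i)}(x,y,z)) and s_i(x,y,z, w'_{f(i)}(x,y,z)) = t_{i+1}(x,y,z). Let α be an equivalence relation on A compatible with each s_i, and let R_1, R_2 be reflexive binary relations on A compatible with each s_i. Then α ∩ (R_1 ∘ R_2) ⊆ (α ∩ R_{f(0)}) ∘ (α ∩ R_{f(1)}) ∘ ⋯ ∘ (α ∩ R_{f(h−1)}). -/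
/-- `chain T i m` is the composition `T i ∘ T (i+1) ∘ ⋯ ∘ T (i+m-1)` (`m` factors). -/
def chain {A : Type*} (T : ℕ → Set (A × A)) : ℕ → ℕ → Set (A × A)
  | _, 0 => {p | p.1 = p.2}
  | i, m + 1 => rcomp (T i) (chain T (i + 1) m)

/-- A sequence of `T`-steps `u i, u (i+1), …, u (i+m)` witnesses membership in `chain T i m`. -/
theorem chain_of_seq {A : Type*} (T : ℕ → Set (A × A)) (u : ℕ → A) :
    ∀ m i, (∀ j, i ≤ j → j < i + m → (u j, u (j + 1)) ∈ T j) →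
      (u i, u (i + m)) ∈ chain T i m
  | 0, _, _ => rfl
  | m + 1, i, H => by
    refine ⟨u (i + 1), H i le_rfl (by omega), ?_⟩
    have := chain_of_seq T u m (i + 1) fun j h1 h2 => H j (by omega) (by omega)
    rwa [show i + 1 + m = i + (m + 1) by omega] at this

/-- terms `t_i, s_i` following a pattern `f : {0,…,h-1} → {1,2}` give
`α ∩ (R₁ ∘ R₂) ⊆ (α ∩ R_{f(0)}) ∘ (α ∩ R_{f(1)}) ∘ ⋯ ∘ (α ∩ R_{f(h-1)})`.
Here `w₁ = x`, `w₂ = y`, `w'₁ = y`, `w'₂ = z`. -/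
theorem stmt15 {A : Type*} {h : ℕ} (hh : 1 ≤ h)
    (f : ℕ → ℕ) (hf : ∀ i, i < h → f i = 1 ∨ f i = 2)
    (t : ℕ → A → A → A → A) (s : ℕ → A → A → A → A → A)
    (ht0 : ∀ x y z, t 0 x y z = x)
    (hth : ∀ x y z, t h x y z = z)
    (htflat : ∀ i, i ≤ h → ∀ x y, t i x y x = x)
    (hs1 : ∀ i, i < h → ∀ x y z,
      t i x y z = s i x y z (if f i = 1 then x else y))
    (hs2 : ∀ i, i < h → ∀ x y z,
      s i x y z (if f i = 1 then y else z) = t (i + 1) x y z)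
    (α : Set (A × A))
    (hαeq : Equivalence fun a b => (a, b) ∈ α)
    (hαcomp : ∀ i, i < h → compat4 α (s i))
    (R₁ R₂ : Set (A × A))
    (hR₁refl : ∀ a, (a, a) ∈ R₁) (hR₁comp : ∀ i, i < h → compat4 R₁ (s i))
    (hR₂refl : ∀ a, (a, a) ∈ R₂) (hR₂comp : ∀ i, i < h → compat4 R₂ (s i)) :
    α ∩ rcomp R₁ R₂ ⊆
      chain (fun i => α ∩ (if f i = 1 then R₁ else R₂)) 0 h := by
  rintro ⟨a, c⟩ ⟨hac, b, hab, hbc⟩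
  simp only at hac hab hbc
  have hα : ∀ i, i ≤ h → (t i a b c, a) ∈ α := by
    intro i hi
    rcases hi.lt_or_eq with hi' | rfl
    · have key : (t i a b c, t i a b a) ∈ α := by
        rw [hs1 i hi', hs1 i hi']
        exact hαcomp i hi' _ _ _ _ _ _ _ _ (hαeq.refl _) (hαeq.refl _) (hαeq.symm hac)
          (hαeq.refl _)
      rwa [htflat i hi] at key
    · rw [hth]
      exact hαeq.symm hac
  have main := chain_of_seq (fun i => α ∩ (if f i = 1 then R₁ else R₂))
    (fun i => t i a b c) h 0 ?_
  · simpa only [Nat.zero_add, ht0, hth] using main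
  · intro j _ hj
    have hj : j < h := by omega
    refine ⟨hαeq.trans (hα j hj.le) (hαeq.symm (hα (j + 1) hj)), ?_⟩
    rw [← hs2 j hj, hs1 j hj]
    split_ifs
    · exact hR₁comp j hj _ _ _ _ _ _ _ _ (hR₁refl _) (hR₁refl _) (hR₁refl _) hab
    · exact hR₂comp j hj _ _ _ _ _ _ _ _ (hR₂refl _) (hR₂refl _) (hR₂refl _) hbc
end

section
/- Let A be a set, n ≥ 1, and let d_0, …, d_n : A³ → A be directed Jónsson operations on A. Let Θ be a reflexive symmetric binary relation on A compatible with each d_i, and let σ = ⋃_{g∈G} σ_g where G is nonempty and each σ_g is a reflexive binary relation compatible with each d_i. Then Θ ∩ σ⁺ ⊆ (Θ ∩ σ)⁺, where R⁺ denotes the transitive closure of R. -/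
/-- directed Jónsson operations give `Θ ∩ σ⁺ ⊆ (Θ ∩ σ)⁺`. -/
theorem stmt16 {A : Type*} {n : ℕ} (hn : 1 ≤ n)
    (d : ℕ → A → A → A → A)
    (hd0 : ∀ x y z, d 0 x y z = x)
    (hdn : ∀ x y z, d n x y z = z)
    (hdflat : ∀ i, i ≤ n → ∀ x y, d i x y x = x)
    (hddir : ∀ i, i < n → ∀ x z, d i x z z = d (i + 1) x x z)
    (Θ : Set (A × A))
    (hΘrefl : ∀ a, (a, a) ∈ Θ)
    (hΘsymm : ∀ a b, (a, b) ∈ Θ → (b, a) ∈ Θ)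
    (hΘcomp : ∀ i, i ≤ n → compat3 Θ (d i))
    {G : Type*} [Nonempty G] (σ : G → Set (A × A))
    (hσrefl : ∀ g a, (a, a) ∈ σ g)
    (hσcomp : ∀ g i, i ≤ n → compat3 (σ g) (d i)) :
    Θ ∩ transCl (⋃ g, σ g) ⊆ transCl (Θ ∩ (⋃ g, σ g)) := by
  rintro ⟨a, c⟩ ⟨hac, hσ⟩
  have hca := hΘsymm _ _ hac
  have hΘ : ∀ i, i ≤ n → ∀ j, j ≤ n → ∀ x y, (d i a x c, d j a y c) ∈ Θ := by
    intro i hi j hj x y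
    have h₁ : (a, d j a y c) ∈ Θ := by
      have h := hΘcomp j hj a y a a y c (hΘrefl a) (hΘrefl y) hac
      rwa [hdflat j hj] at h
    have h₂ : (c, d j a y c) ∈ Θ := by
      have h := hΘcomp j hj c y c a y c hca (hΘrefl y) (hΘrefl c)
      rwa [hdflat j hj] at h
    have h := hΘcomp i hi a x c _ x _ h₁ (hΘrefl x) h₂
    rwa [hdflat i hi] at h
  have hrow : ∀ i, i ≤ n → Relation.TransGen (fun u v => (u, v) ∈ Θ ∩ ⋃ g, σ g)
      (d i a a c) (d i a c c) := by
    intro i hi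
    refine Relation.TransGen.lift (fun x => d i a x c) (fun x y hxy => ?_) a c hσ
    obtain ⟨g, hg⟩ := Set.mem_iUnion.1 hxy
    exact ⟨hΘ i hi i hi x y, Set.mem_iUnion.2
      ⟨g, hσcomp g i hi _ _ _ _ _ _ (hσrefl g a) hg (hσrefl g c)⟩⟩
  have hpath : ∀ i, i ≤ n → Relation.TransGen (fun u v => (u, v) ∈ Θ ∩ ⋃ g, σ g)
      a (d i a c c) := by
    intro i
    induction i with
    | zero => intro hi; simpa only [hd0] using hrow 0 hi
    | succ i ih =>
      intro hi
      have h := ih (by omega)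
      rw [hddir i (by omega)] at h
      exact h.trans (hrow (i + 1) hi)
  have h := hpath n le_rfl
  rwa [hdn] at h
end

section
/- Let A be a set, n ≥ 1, and let d_0, …, d_n : A³ → A be directed Jónsson operations on A. Let Θ be a reflexive symmetric binary relation on A compatible with each d_i, and let σ = ⋃_{g∈G} σ_g and τ = ⋃_{f∈F} τ_f, where G, F are nonempty and each σ_g and each τ_f is a reflexive binary relation compatible with each d_i. Then Θ ∩ (σ ∘ τ)⁺ ⊆ ((Θ ∩ σ) ∘ (Θ ∩ τ))⁺, where R⁺ denotes the transitive closure of R. -/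
/-!
A maximal `Θ`-clique `K` (a block of the tolerance `Θ`) containing `a` and `c` consists of exactly
the elements `Θ`-related to all of `K`. It absorbs each `d i` in the outer variables: if `x, z ∈ K`
and `y` is arbitrary, then `d i x y z` is `Θ`-related to `d i k y k = k` for every `k ∈ K`, so
`d i x y z ∈ K`. A walk from `a` to `c` along `σ ∘ τ` is therefore mapped by `d i a · c` to a walk
inside `K`, still along `σ ∘ τ` because the relations are reflexive and compatible; inside `K` every
step also lies in `Θ`. Since `d i a c c = d (i + 1) a a c`, these walks concatenate to a walk from
`d 0 a a c = a` to `d n a c c = c`.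
-/

/-- Two related elements of a reflexive symmetric relation lie in a common block: a clique `K` that
contains every element related to all of `K`. -/
lemma exists_block {A : Type*} (Θ : Set (A × A))
    (hrefl : ∀ a, (a, a) ∈ Θ) (hsymm : ∀ a b, (a, b) ∈ Θ → (b, a) ∈ Θ)
    {a c : A} (hac : (a, c) ∈ Θ) :
    ∃ K : Set A, a ∈ K ∧ c ∈ K ∧ (∀ x ∈ K, ∀ y ∈ K, (x, y) ∈ Θ) ∧
      ∀ x, (∀ k ∈ K, (x, k) ∈ Θ) → x ∈ K := by
  -- For a symmetric relation, chains in the sense of `IsChain` are cliques.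
  have hch : IsChain (fun x y => (x, y) ∈ Θ) ({a, c} : Set A) :=
    IsChain.pair hac
  obtain ⟨K, hK, hsub⟩ := hch.exists_maxChain
  refine ⟨K, hsub (by simp), hsub (by simp), ?_, ?_⟩
  · intro x hx y hy
    by_cases hxy : x = y
    · exact hxy ▸ hrefl x
    · exact (hK.1 hx hy hxy).elim id (hsymm _ _)
  · intro x hx
    have hins : IsChain (fun x y => (x, y) ∈ Θ) (insert x K) :=
      hK.1.insert fun k hk _ => Or.inl (hx k hk)
    rw [hK.2 hins (Set.subset_insert x K)]
    exact Set.mem_insert x K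


/-- directed Jónsson operations give
`Θ ∩ (σ ∘ τ)⁺ ⊆ ((Θ ∩ σ) ∘ (Θ ∩ τ))⁺`. -/
theorem stmt17 {A : Type*} {n : ℕ} (hn : 1 ≤ n)
    (d : ℕ → A → A → A → A)
    (hd0 : ∀ x y z, d 0 x y z = x)
    (hdn : ∀ x y z, d n x y z = z)
    (hdflat : ∀ i, i ≤ n → ∀ x y, d i x y x = x)
    (hddir : ∀ i, i < n → ∀ x z, d i x z z = d (i + 1) x x z)
    (Θ : Set (A × A))
    (hΘrefl : ∀ a, (a, a) ∈ Θ)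
    (hΘsymm : ∀ a b, (a, b) ∈ Θ → (b, a) ∈ Θ)
    (hΘcomp : ∀ i, i ≤ n → compat3 Θ (d i))
    {G : Type*} [Nonempty G] (σ : G → Set (A × A))
    (hσrefl : ∀ g a, (a, a) ∈ σ g)
    (hσcomp : ∀ g i, i ≤ n → compat3 (σ g) (d i))
    {F : Type*} [Nonempty F] (τ : F → Set (A × A))
    (hτrefl : ∀ f a, (a, a) ∈ τ f)
    (hτcomp : ∀ f i, i ≤ n → compat3 (τ f) (d i)) :
    Θ ∩ transCl (rcomp (⋃ g, σ g) (⋃ f, τ f)) ⊆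
      transCl (rcomp (Θ ∩ (⋃ g, σ g)) (Θ ∩ (⋃ f, τ f))) := by
  rintro ⟨a, c⟩ ⟨hac, hwalk⟩
  obtain ⟨K, haK, hcK, hclique, hmax⟩ := exists_block Θ hΘrefl hΘsymm hac
  have hmem : ∀ i, i ≤ n → ∀ y, d i a y c ∈ K := by
    intro i hi y
    refine hmax _ fun k hk => ?_
    have h := hΘcomp i hi a y c k y k (hclique a haK k hk) (hΘrefl y) (hclique c hcK k hk)
    rwa [hdflat i hi k y] at h
  have hrow : ∀ i, i ≤ n → Relation.TransGen
      (fun x y => (x, y) ∈ rcomp (Θ ∩ (⋃ g, σ g)) (Θ ∩ (⋃ f, τ f)))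
      (d i a a c) (d i a c c) := by
    intro i hi
    refine Relation.TransGen.lift (fun y => d i a y c) ?_ _ _ hwalk
    rintro x y ⟨m, hxm, hmy⟩
    obtain ⟨g, hg⟩ := Set.mem_iUnion.1 hxm
    obtain ⟨f, hf⟩ := Set.mem_iUnion.1 hmy
    exact ⟨d i a m c,
      ⟨hclique _ (hmem i hi x) _ (hmem i hi m), Set.mem_iUnion.2
        ⟨g, hσcomp g i hi _ _ _ _ _ _ (hσrefl g a) hg (hσrefl g c)⟩⟩,
      ⟨hclique _ (hmem i hi m) _ (hmem i hi y), Set.mem_iUnion.2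
        ⟨f, hτcomp f i hi _ _ _ _ _ _ (hτrefl f a) hf (hτrefl f c)⟩⟩⟩
  have hconcat : ∀ i, i ≤ n → Relation.TransGen
      (fun x y => (x, y) ∈ rcomp (Θ ∩ (⋃ g, σ g)) (Θ ∩ (⋃ f, τ f))) a (d i a c c) := by
    intro i
    induction i with
    | zero =>
      intro hi
      have h := hrow 0 hi
      rwa [hd0 a a c] at h
    | succ i ih =>
      intro hi
      have h := ih (by omega)
      rw [hddir i (by omega) a c] at h
      exact h.trans (hrow (i + 1) hi)
  have h := hconcat n le_rfl
  rwa [hdn a c c] at h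
end

section
/- Let A be an algebra, i.e., a set A together with an indexed family of finitary operations f_i : A^{n_i} → A. Suppose that for all U-admissible binary relations σ, τ on A one has σ ∩ (τ ∘ τ) ⊆ (σ ∩ τ)⁺. Then for all U-admissible binary relations σ, τ on A one has σ⁺ ∩ τ⁺ = (σ ∩ τ)⁺. -/
universe u

/-- A binary relation is admissible for the algebra `(A, ops)` if it is preserved
by every operation. -/
def Admissible {A : Type u} {I : Type*} (arity : I → ℕ)
    (ops : ∀ i, (Fin (arity i) → A) → A) (R : Set (A × A)) : Prop :=
  ∀ i, ∀ a b : Fin (arity i) → A, (∀ j, (a j, b j) ∈ R) → (ops i a, ops i b) ∈ R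

/-- A binary relation is U-admissible if it is the union of a nonempty family of
reflexive admissible relations. -/
def UAdm {A : Type u} {I : Type*} (arity : I → ℕ)
    (ops : ∀ i, (Fin (arity i) → A) → A) (R : Set (A × A)) : Prop :=
  ∃ (ι : Type u) (_ : Nonempty ι) (S : ι → Set (A × A)),
    (∀ g, (∀ a, (a, a) ∈ S g) ∧ Admissible arity ops (S g)) ∧ R = ⋃ g, S g

/-- The relation obtained from `R` by squaring `k` times, i.e. the power `R ^ (2 ^ k)`. -/
def sqIter {A : Type*} (R : Set (A × A)) : ℕ → Set (A × A)
  | 0 => R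
  | k + 1 => rcomp (sqIter R k) (sqIter R k)

theorem transCl_subset {A : Type*} {R S : Set (A × A)} (h : R ⊆ transCl S) :
    transCl R ⊆ transCl S := by
  rintro ⟨a, b⟩ hab
  change Relation.TransGen _ a b at hab
  change Relation.TransGen _ a b
  induction hab with
  | single h1 => exact h h1
  | tail _ h1 ih => exact Relation.TransGen.trans ih (h h1)

theorem sqIter_subset_transCl {A : Type*} (R : Set (A × A)) (k : ℕ) :
    sqIter R k ⊆ transCl R := by
  induction k with
  | zero => exact fun p hp => Relation.TransGen.single hp
  | succ k ih =>
    rintro ⟨a, c⟩ ⟨b, hab, hbc⟩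
    exact Relation.TransGen.trans (ih (a := (a, b)) hab) (ih (a := (b, c)) hbc)

theorem UAdm.refl {A : Type u} {I : Type*} {arity : I → ℕ}
    {ops : ∀ i, (Fin (arity i) → A) → A} {R : Set (A × A)} (h : UAdm arity ops R) (a : A) :
    (a, a) ∈ R := by
  obtain ⟨ι, ⟨g⟩, S, hS, rfl⟩ := h
  exact Set.mem_iUnion.2 ⟨g, (hS g).1 a⟩

theorem UAdm.rcomp_self {A : Type u} {I : Type*} {arity : I → ℕ}
    {ops : ∀ i, (Fin (arity i) → A) → A} {R : Set (A × A)} (h : UAdm arity ops R) :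
    UAdm arity ops (rcomp R R) := by
  obtain ⟨ι, hι, S, hS, rfl⟩ := h
  refine ⟨ι × ι, inferInstance, fun g => rcomp (S g.1) (S g.2), fun g => ⟨fun a => ?_, ?_⟩, ?_⟩
  · exact ⟨a, (hS g.1).1 a, (hS g.2).1 a⟩
  · intro i a c hac
    choose b hab hbc using hac
    exact ⟨ops i b, (hS g.1).2 i a b hab, (hS g.2).2 i b c hbc⟩
  · ext ⟨a, c⟩
    simp only [rcomp, Set.mem_iUnion, Set.mem_ofPred_eq, Prod.exists]
    constructor
    · rintro ⟨b, ⟨g, hg⟩, ⟨k, hk⟩⟩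
      exact ⟨g, k, b, hg, hk⟩
    · rintro ⟨g, k, b, hg, hk⟩
      exact ⟨b, ⟨g, hg⟩, ⟨k, hk⟩⟩

theorem UAdm.sqIter {A : Type u} {I : Type*} {arity : I → ℕ}
    {ops : ∀ i, (Fin (arity i) → A) → A} {R : Set (A × A)} (h : UAdm arity ops R) (k : ℕ) :
    UAdm arity ops (sqIter R k) := by
  induction k with
  | zero => exact h
  | succ k ih => exact ih.rcomp_self

theorem subset_sqIter {A : Type*} {R : Set (A × A)} (h : ∀ a, (a, a) ∈ R) (k : ℕ) :
    R ⊆ sqIter R k := by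
  induction k with
  | zero => exact subset_rfl
  | succ k ih => exact fun p hp => ⟨p.2, ih hp, ih (h p.2)⟩

theorem exists_sqIter_of_transCl {A : Type*} {R : Set (A × A)} (h : ∀ a, (a, a) ∈ R)
    {p : A × A} (hp : p ∈ transCl R) : ∃ k, p ∈ sqIter R k := by
  obtain ⟨a, b⟩ := p
  change Relation.TransGen _ a b at hp
  induction hp with
  | single h1 => exact ⟨0, h1⟩
  | tail _ h1 ih =>
    obtain ⟨k, hk⟩ := ih
    exact ⟨k + 1, _, hk, subset_sqIter h k h1⟩

/-- One-sided case, by induction on `k` for `σ ∩ τ ^ (2 ^ k)`: the hypothesis for `σ` and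
`τ ^ (2 ^ k)` bounds `σ ∩ τ ^ (2 ^ (k + 1))` by `(σ ∩ τ ^ (2 ^ k))⁺`. -/
theorem inter_transCl_subset {A : Type u} {I : Type*} {arity : I → ℕ}
    {ops : ∀ i, (Fin (arity i) → A) → A}
    (hyp : ∀ σ τ : Set (A × A), UAdm arity ops σ → UAdm arity ops τ →
      σ ∩ rcomp τ τ ⊆ transCl (σ ∩ τ))
    {σ τ : Set (A × A)} (hσ : UAdm arity ops σ) (hτ : UAdm arity ops τ) :
    σ ∩ transCl τ ⊆ transCl (σ ∩ τ) := by
  have key : ∀ k, σ ∩ sqIter τ k ⊆ transCl (σ ∩ τ) := by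
    intro k
    induction k with
    | zero => exact fun p hp => Relation.TransGen.single hp
    | succ k ih => exact (hyp σ _ hσ (hτ.sqIter k)).trans (transCl_subset ih)
  rintro p ⟨hp, hp'⟩
  obtain ⟨k, hk⟩ := exists_sqIter_of_transCl hτ.refl hp'
  exact key k ⟨hp, hk⟩

/-- if `σ ∩ (τ ∘ τ) ⊆ (σ ∩ τ)⁺` holds for all U-admissible `σ, τ`,
then `σ⁺ ∩ τ⁺ = (σ ∩ τ)⁺` for all U-admissible `σ, τ`. -/
theorem stmt18 {A : Type u} {I : Type*} (arity : I → ℕ)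
    (ops : ∀ i, (Fin (arity i) → A) → A)
    (hyp : ∀ σ τ : Set (A × A), UAdm arity ops σ → UAdm arity ops τ →
      σ ∩ rcomp τ τ ⊆ transCl (σ ∩ τ)) :
    ∀ σ τ : Set (A × A), UAdm arity ops σ → UAdm arity ops τ →
      transCl σ ∩ transCl τ = transCl (σ ∩ τ) := by
  intro σ τ hσ hτ
  apply Set.Subset.antisymm
  · rintro p ⟨h1, h2⟩
    obtain ⟨k, hk⟩ := exists_sqIter_of_transCl hσ.refl h1
    refine transCl_subset ?_ (inter_transCl_subset hyp (hσ.sqIter k) hτ ⟨hk, h2⟩)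
    rintro q ⟨hq, hq'⟩
    rw [Set.inter_comm]
    exact inter_transCl_subset hyp hτ hσ ⟨hq', sqIter_subset_transCl σ k hq⟩
  · exact fun p hp =>
      ⟨transCl_subset (fun _ hq => Relation.TransGen.single hq.1) hp,
        transCl_subset (fun _ hq => Relation.TransGen.single hq.2) hp⟩
end
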